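/- PCE exist in every finite strategic-form game: every finite strategic-form game (with no strictly dominated strategies) has at least one player-compatible equilibrium. -/

import Mathlib

open scoped Classical

noncomputable section

variable {ι : Type} [Fintype ι] [DecidableEq ι] {S : ι → Type} [∀ i, Fintype (S i)]

/-- A full-support correlated strategy profile on `S = ∏ i, S i`. -/
def FullSupport (σ : (∀ i, S i) → ℝ) : Prop :=
  (∀ s, 0 < σ s) ∧ ∑ s, σ s = 1

/-- Expected payoff to player `i` from playing `si` against the correlated profile `σ`. -/
def expPay (U : ι → (∀ j, S j) → ℝ) (i : ι) (si : S i) (σ : (∀ j, S j) → ℝ) : ℝ :=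
  ∑ s, σ s * U i (Function.update s i si)

/-- `σ` and `τ` have the same marginal on the strategies of players other than `i` and `j`. -/
def SameMarginal (i j : ι) (σ τ : (∀ k, S k) → ℝ) : Prop :=
  ∀ s : ∀ k, S k,
    (∑ si : S i, ∑ sj : S j, σ (Function.update (Function.update s i si) j sj)) =
    (∑ si : S i, ∑ sj : S j, τ (Function.update (Function.update s i si) j sj))

/-- Player `i` is more compatible with `si` than player `j` is with `sj`. -/
def MoreCompatible (U : ι → (∀ j, S j) → ℝ) (i j : ι) (si : S i) (sj : S j) : Prop :=
  ∀ σ : (∀ k, S k) → ℝ, FullSupport σ →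
    (∀ sj' : S j, expPay U j sj' σ ≤ expPay U j sj σ) →
    ∀ τ : (∀ k, S k) → ℝ, FullSupport τ → SameMarginal i j σ τ →
      ∀ si' : S i, si' ≠ si → expPay U i si' τ < expPay U i si τ

/-- Expected payoff to `i` under an independent mixed strategy profile `μ`. -/
def profPay (U : ι → (∀ j, S j) → ℝ) (i : ι) (μ : ∀ j, S j → ℝ) : ℝ :=
  ∑ s : ∀ j, S j, (∏ j, μ j (s j)) * U i s

/-- `μi` is an `ε`-strategy for player `i`: a mixed strategy putting at least `ε i si`
on each pure strategy `si`. -/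
def InTrembleSet (ε : ∀ i, S i → ℝ) (i : ι) (μi : S i → ℝ) : Prop :=
  (∑ si, μi si = 1) ∧ ∀ si, ε i si ≤ μi si

/-- `μ` is an `ε`-equilibrium: each player's strategy maximizes her payoff over `ε`-strategies. -/
def IsEpsEquilibrium (U : ι → (∀ j, S j) → ℝ) (ε : ∀ i, S i → ℝ) (μ : ∀ i, S i → ℝ) : Prop :=
  (∀ i, InTrembleSet ε i (μ i)) ∧
  ∀ (i : ι) (τi : S i → ℝ), InTrembleSet ε i τi →
    profPay U i (Function.update μ i τi) ≤ profPay U i μ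

/-- A player-compatible tremble profile: positive trembles whose magnitudes respect
the compatibility relation. -/
def PlayerCompatibleTremble (U : ι → (∀ j, S j) → ℝ) (ε : ∀ i, S i → ℝ) : Prop :=
  (∀ i si, 0 < ε i si) ∧
  ∀ (i j : ι) (si : S i) (sj : S j), i ≠ j → MoreCompatible U i j si sj → ε j sj ≤ ε i si

/-- `σstar` is a player-compatible equilibrium: a limit of `ε⁽ᵗ⁾`-equilibria along
player-compatible tremble profiles `ε⁽ᵗ⁾ → 0`. -/
def IsPCE (U : ι → (∀ j, S j) → ℝ) (σstar : ∀ i, S i → ℝ) : Prop :=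
  ∃ (ε : ℕ → ∀ i, S i → ℝ) (σ : ℕ → ∀ i, S i → ℝ),
    (∀ t, PlayerCompatibleTremble U (ε t)) ∧
    (∀ i si, Filter.Tendsto (fun t => ε t i si) Filter.atTop (nhds 0)) ∧
    (∀ t, IsEpsEquilibrium U (ε t) (σ t)) ∧
    (∀ i si, Filter.Tendsto (fun t => σ t i si) Filter.atTop (nhds (σstar i si)))

/-- `si` is strictly dominated: some mixed strategy does strictly better against every
pure profile of the opponents. -/
def StrictlyDominated (U : ι → (∀ j, S j) → ℝ) (i : ι) (si : S i) : Prop :=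
  ∃ μ : S i → ℝ, ((∀ t, 0 ≤ μ t) ∧ ∑ t, μ t = 1) ∧
    ∀ s : ∀ k, S k,
      U i (Function.update s i si) < ∑ t, μ t * U i (Function.update s i t)

/-!
Constant trembles `1 / (t + 1)` are player compatible, so by compactness of the space of mixed
strategy profiles it is enough to find an `ε`-equilibrium for every small tremble profile. In the
game restricted to `ε`-strategies, strategy sets are compact and convex and payoffs are continuous
and linear in a player's own strategy. A point `x` at which the Nikaido-Isoda function
`∑ i, (u i (update x i (y i)) - u i x)` is nonpositive for all `y` is an equilibrium of such a
game, and Ky Fan's minimax inequality provides one: otherwise a partition of unity would yield a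
continuous self-map sending each `x` to some `y` with a positive value, and a fixed point of it,
which exists by Brouwer's theorem, would contradict the vanishing of the function at `y = x`.

Brouwer's theorem is proved analytically, following Milnor and Rogers. If `r` is a `C¹` retraction
of a ball onto its boundary, then for small `t` the map `x ↦ x + t • (r x - x)` is a diffeomorphism
of the open ball, so the integral of its Jacobian determinant is the volume of the ball. This
integral is a polynomial in `t`, hence it is still the volume at `t = 1`; but there the determinant
is that of the derivative of `r`, which vanishes because the image of `r` has empty interior.
-/

section AnalyticBrouwer

open MeasureTheory Set Filter Topology Polynomial
open scoped NNReal

theorem exists_polynomial_eval_eq_det_one_add_smul {R M : Type*} [CommRing R] [Nontrivial R]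
    [AddCommGroup M] [Module R M] [Module.Free R M] [Module.Finite R M] (A : Module.End R M) :
    ∃ P : R[X], P.natDegree ≤ Module.finrank R M ∧ ∀ t, P.eval t = LinearMap.det (1 + t • A) := by
  let b := Module.finBasis R M
  let N := LinearMap.toMatrix b b A
  refine ⟨((X : R[X]) • N.map C + (1 : Matrix _ _ R).map C).det, ?_, fun t => ?_⟩
  · simpa using natDegree_det_X_add_C_le N 1
  · rw [← LinearMap.det_toMatrix b, ← coe_evalRingHom, RingHom.map_det]
    congr 1
    ext i j
    simp only [RingHom.mapMatrix_apply, Matrix.map_apply, Matrix.add_apply, Matrix.smul_apply,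
      smul_eq_mul, coe_evalRingHom, eval_mul, eval_X, eval_C, map_add, map_smul,
      LinearMap.toMatrix_one]
    exact add_comm _ _

theorem exists_polynomial_eval_eq_integral {α : Type*} [MeasurableSpace α] {μ : Measure α}
    {F : ℝ → α → ℝ} {n : ℕ} (hF : ∀ t, Integrable (F t) μ)
    (hpoly : ∀ x, ∃ P : ℝ[X], P.natDegree ≤ n ∧ ∀ t, P.eval t = F t x) :
    ∃ P : ℝ[X], ∀ t, P.eval t = ∫ x, F t x ∂μ := by
  let s := Finset.range (n + 1)
  let node : ℕ → ℝ := Nat.cast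
  have interpolation (t : ℝ) (x : α) :
      F t x = ∑ k ∈ s, F (node k) x * (Lagrange.basis s node k).eval t := by
    obtain ⟨P, hdeg, hP⟩ := hpoly x
    have hdeg' : P.degree < s.card := by
      rw [Finset.card_range]
      exact degree_le_natDegree.trans_lt (Nat.cast_lt.2 (Nat.lt_succ_of_le hdeg))
    have heq := Lagrange.eq_interpolate (Nat.cast_injective.injOn : InjOn node s) hdeg'
    rw [← hP t, heq, Lagrange.interpolate_apply, eval_finsetSum]
    simp only [eval_mul, eval_C, hP, node]
  refine ⟨∑ k ∈ s, C (∫ x, F (node k) x ∂μ) * Lagrange.basis s node k, fun t => ?_⟩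
  simp_rw [interpolation t, eval_finsetSum, eval_mul, eval_C]
  rw [integral_finsetSum _ fun k _ => (hF _).mul_const _]
  simp only [integral_mul_const]

theorem image_eq_self_of_isOpen_image {X : Type*} [TopologicalSpace X] [T2Space X] {U : Set X}
    {f : X → X} (hU : IsOpen U) (hconn : IsPreconnected U) (hcpt : IsCompact (closure U))
    (hf : ContinuousOn f (closure U)) (hopen : IsOpen (f '' U)) (hmaps : MapsTo f U U)
    (hfix : ∀ x ∈ frontier U, f x = x) : f '' U = U := by
  obtain rfl | ⟨x₀, hx₀⟩ := U.eq_empty_or_nonempty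
  · exact image_empty f
  refine hmaps.image_subset.antisymm <| hconn.subset_of_closure_inter_subset hopen
    ⟨f x₀, hmaps hx₀, mem_image_of_mem f hx₀⟩ ?_
  rintro y ⟨hy, hyU⟩
  obtain ⟨x, hx, rfl⟩ :=
    closure_minimal (image_mono subset_closure) (hcpt.image_of_continuousOn hf).isClosed hy
  by_cases hxU : x ∈ U
  · exact mem_image_of_mem f hxU
  · have hxf : f x = x := hfix x (hU.frontier_eq ▸ ⟨hx, hxU⟩)
    exact absurd (hxf ▸ hyU) hxU

theorem injOn_add_of_lipschitzOnWith {E : Type*} [NormedAddCommGroup E] {h : E → E} {s : Set E}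
    {k : ℝ≥0} (hk : k < 1) (hh : LipschitzOnWith k h s) : InjOn (fun x => x + h x) s := by
  intro x hx y hy hxy
  have hdist : dist x y ≤ k * dist x y := calc
    dist x y = dist (h x) (h y) := by
      rw [dist_comm (h x), dist_eq_norm, dist_eq_norm, sub_eq_sub_iff_add_eq_add.2]
      simpa only [add_comm] using hxy
    _ ≤ k * dist x y := hh.dist_le_mul x hx y hy
  have hk' : (k : ℝ) < 1 := hk
  exact dist_le_zero.1 (by nlinarith [hk', dist_nonneg (x := x) (y := y)])

section NormedSpace

variable {E : Type*} [NormedAddCommGroup E] [NormedSpace ℝ E] [FiniteDimensional ℝ E]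

theorem map_nhds_eq_of_det_ne_zero {f : E → E} {f' : E →L[ℝ] E} {x : E}
    (hf : HasStrictFDerivAt f f' x) (hdet : f'.det ≠ 0) : map f (𝓝 x) = 𝓝 (f x) :=
  have := FiniteDimensional.complete ℝ E
  HasStrictFDerivAt.map_nhds_eq_of_equiv
    (f' := f'.toContinuousLinearEquivOfDetNeZero hdet) (by simpa using hf)

theorem det_one_add_pos {A : E →L[ℝ] E} (hA : ‖A‖ < 1) : 0 < (1 + A : E →L[ℝ] E).det := by
  have := FiniteDimensional.complete ℝ E
  have hne : ∀ B ∈ Metric.ball (0 : E →L[ℝ] E) 1, (1 + B : E →L[ℝ] E).det ≠ 0 := by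
    intro B hB
    have hunit : IsUnit (1 - -B) := isUnit_one_sub_of_norm_lt_one (by simpa using hB)
    rw [sub_neg_eq_add] at hunit
    exact (LinearMap.isUnit_det _ (hunit.map ContinuousLinearMap.toLinearMapRingHom)).ne_zero
  by_contra! hle
  have hcont : Continuous fun B : E →L[ℝ] E => (1 + B : E →L[ℝ] E).det :=
    ContinuousLinearMap.continuous_det.comp (continuous_const.add continuous_id)
  obtain ⟨B, hB, hB0⟩ := (convex_ball (0 : E →L[ℝ] E) 1).isPreconnected.intermediate_value
    (mem_ball_zero_iff.2 hA) (Metric.mem_ball_self one_pos) hcont.continuousOn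
    ⟨hle, by simp [ContinuousLinearMap.det]⟩
  exact hne B hB hB0

theorem det_fderiv_eq_zero_of_mapsTo {f : E → E} {x : E} {U s : Set E} (hU : U ∈ 𝓝 x)
    (hf : ContDiffAt ℝ 1 f x) (hmaps : MapsTo f U s) (hs : interior s = ∅) :
    (fderiv ℝ f x).det = 0 := by
  by_contra hdet
  have hmem : s ∈ 𝓝 (f x) := by
    rw [← map_nhds_eq_of_det_ne_zero (hf.hasStrictFDerivAt one_ne_zero) hdet]
    exact mem_map.2 (mem_of_superset hU hmaps)
  exact notMem_empty (f x) (hs ▸ mem_interior_iff_mem_nhds.2 hmem)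

section Integral

variable [MeasurableSpace E] [BorelSpace E]

theorem setIntegral_det_one_add_fderiv (μ : Measure E) [μ.IsAddHaarMeasure] {U : Set E}
    (hU : IsOpen U) (hconv : Convex ℝ U) (hbdd : Bornology.IsBounded U) {h : E → E} {k : ℝ≥0}
    (hk : k < 1) (hcont : ContinuousOn h (closure U)) (hdiff : ∀ x ∈ U, ContDiffAt ℝ 1 h x)
    (hbound : ∀ x ∈ U, ‖fderiv ℝ h x‖₊ ≤ k) (hmaps : MapsTo (fun x => x + h x) U U)
    (hzero : ∀ x ∈ frontier U, h x = 0) :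
    ∫ x in U, (1 + fderiv ℝ h x : E →L[ℝ] E).det ∂μ = μ.real U := by
  let f : E → E := fun x => x + h x
  have hf' (x) (hx : x ∈ U) : HasStrictFDerivAt f (1 + fderiv ℝ h x) x :=
    (hasStrictFDerivAt_id x).add ((hdiff x hx).hasStrictFDerivAt one_ne_zero)
  have hdet (x) (hx : x ∈ U) : 0 < (1 + fderiv ℝ h x : E →L[ℝ] E).det :=
    det_one_add_pos <| (hbound x hx).trans_lt hk
  have hopen : IsOpen (f '' U) := by
    rw [isOpen_iff_mem_nhds]
    rintro _ ⟨x, hx, rfl⟩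
    rw [← map_nhds_eq_of_det_ne_zero (hf' x hx) (hdet x hx).ne']
    exact image_mem_map (hU.mem_nhds hx)
  have himage : f '' U = U :=
    image_eq_self_of_isOpen_image hU hconv.isPreconnected hbdd.isCompact_closure
      (continuousOn_id.add hcont) hopen hmaps fun x hx => by simp [f, hzero x hx]
  have hinj : InjOn f U := injOn_add_of_lipschitzOnWith hk <|
    hconv.lipschitzOnWith_of_nnnorm_fderiv_le
      (fun x hx => (hdiff x hx).differentiableAt one_ne_zero) hbound
  calc ∫ x in U, (1 + fderiv ℝ h x : E →L[ℝ] E).det ∂μ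
      = ∫ x in U, |(1 + fderiv ℝ h x : E →L[ℝ] E).det| • (1 : ℝ) ∂μ :=
        setIntegral_congr_fun hU.measurableSet fun x hx => by
          simp [abs_of_pos (hdet x hx)]
    _ = ∫ _ in f '' U, (1 : ℝ) ∂μ :=
        (integral_image_eq_integral_abs_det_fderiv_smul μ hU.measurableSet
          (fun x hx => (hf' x hx).hasFDerivAt.hasFDerivWithinAt) hinj fun _ => (1 : ℝ)).symm
    _ = μ.real U := by rw [himage]; simp

theorem setIntegral_det_one_add_smul_fderiv_sub_one (μ : Measure E) [μ.IsAddHaarMeasure]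
    {U : Set E} (hU : IsOpen U) (hconv : Convex ℝ U) (hbdd : Bornology.IsBounded U) {f : E → E}
    {k t : ℝ} (hf : ∀ x ∈ closure U, ContDiffAt ℝ 1 f x) (hmaps : MapsTo f U (closure U))
    (hfix : ∀ x ∈ frontier U, f x = x) (hk : ∀ x ∈ U, ‖fderiv ℝ f x - 1‖ ≤ k)
    (ht : t ∈ Ico 0 1) (htk : t * k < 1) :
    ∫ x in U, (1 + t • (fderiv ℝ f x - 1) : E →L[ℝ] E).det ∂μ = μ.real U := by
  obtain rfl | ⟨x₀, hx₀⟩ := U.eq_empty_or_nonempty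
  · simp
  have hk₀ : 0 ≤ k := (norm_nonneg _).trans (hk x₀ hx₀)
  let h : E → E := fun x => t • (f x - x)
  have hh (x) (hx : x ∈ closure U) : ContDiffAt ℝ 1 h x :=
    contDiffAt_const.smul ((hf x hx).sub contDiffAt_id)
  have hfderiv (x) (hx : x ∈ U) : fderiv ℝ h x = t • (fderiv ℝ f x - 1) :=
    ((((hf x (subset_closure hx)).differentiableAt one_ne_zero).hasFDerivAt.sub
      (hasFDerivAt_id x)).const_smul t).fderiv
  have hbound (x) (hx : x ∈ U) : ‖fderiv ℝ h x‖₊ ≤ Real.toNNReal (t * k) := by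
    rw [← NNReal.coe_le_coe, Real.coe_toNNReal _ (mul_nonneg ht.1 hk₀), coe_nnnorm,
      hfderiv x hx, norm_smul, Real.norm_of_nonneg ht.1]
    exact mul_le_mul_of_nonneg_left (hk x hx) ht.1
  have hmaps' : MapsTo (fun x => x + h x) U U := by
    intro x hx
    have hmem := hconv.combo_interior_closure_mem_interior (hU.interior_eq.symm ▸ hx) (hmaps hx)
      (sub_pos.2 ht.2) ht.1 (sub_add_cancel 1 t)
    convert interior_subset hmem using 1
    simp only [h]
    module
  calc ∫ x in U, (1 + t • (fderiv ℝ f x - 1) : E →L[ℝ] E).det ∂μ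
      = ∫ x in U, (1 + fderiv ℝ h x : E →L[ℝ] E).det ∂μ :=
        setIntegral_congr_fun hU.measurableSet fun x hx => by rw [hfderiv x hx]
    _ = μ.real U :=
        setIntegral_det_one_add_fderiv μ hU hconv hbdd (Real.toNNReal_lt_one.2 htk)
          (fun x hx => (hh x hx).continuousAt.continuousWithinAt)
          (fun x hx => hh x (subset_closure hx)) hbound hmaps'
          fun x hx => by simp [h, hfix x hx]

theorem setIntegral_det_fderiv_of_eq_self_on_frontier (μ : Measure E) [μ.IsAddHaarMeasure]
    {U : Set E} (hU : IsOpen U) (hconv : Convex ℝ U) (hbdd : Bornology.IsBounded U) {f : E → E}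
    (hf : ∀ x ∈ closure U, ContDiffAt ℝ 1 f x) (hmaps : MapsTo f U (closure U))
    (hfix : ∀ x ∈ frontier U, f x = x) :
    ∫ x in U, (fderiv ℝ f x).det ∂μ = μ.real U := by
  let A : E → E →L[ℝ] E := fun x => fderiv ℝ f x - 1
  have hA : ContinuousOn A (closure U) := fun x hx =>
    (((hf x hx).continuousAt_fderiv one_ne_zero).sub continuousAt_const).continuousWithinAt
  obtain ⟨P, hP⟩ : ∃ P : ℝ[X], ∀ t, P.eval t = ∫ x in U, (1 + t • A x : E →L[ℝ] E).det ∂μ := by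
    refine exists_polynomial_eval_eq_integral (n := Module.finrank ℝ E) (fun t => ?_) fun x => ?_
    · have hdet : ContinuousOn (fun x => (1 + t • A x : E →L[ℝ] E).det) (closure U) :=
        ContinuousLinearMap.continuous_det.comp_continuousOn
          (continuousOn_const.add (hA.const_smul t))
      exact (hdet.integrableOn_compact hbdd.isCompact_closure).mono_set subset_closure
    · exact exists_polynomial_eval_eq_det_one_add_smul (A x).toLinearMap
  obtain ⟨k, hk⟩ := hbdd.isCompact_closure.exists_bound_of_continuousOn hA
  have hsmall (t : ℝ) (ht : t ∈ Ioo 0 (1 / (|k| + 1))) : P.eval t = μ.real U := by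
    have hprod : t * (|k| + 1) < 1 := (lt_div_iff₀ (by positivity)).1 ht.2
    rw [hP]
    refine setIntegral_det_one_add_smul_fderiv_sub_one μ hU hconv hbdd hf hmaps hfix
      (fun x hx => hk x (subset_closure hx)) ⟨ht.1.le, ?_⟩ ?_
    · nlinarith [ht.1, abs_nonneg k]
    · nlinarith [ht.1, le_abs_self k]
  have hconst : P = C (μ.real U) := eq_of_infinite_eval_eq _ _ <|
    (Ioo_infinite (by positivity : (0 : ℝ) < 1 / (|k| + 1))).mono fun t ht => by
      simpa using hsmall t ht
  simpa [A, hconst] using (hP 1).symm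

end Integral

theorem not_mapsTo_frontier_of_eq_self_on_frontier {U : Set E} (hU : IsOpen U)
    (hconv : Convex ℝ U) (hbdd : Bornology.IsBounded U) (hne : U.Nonempty) {r : E → E}
    (hr : ∀ x ∈ closure U, ContDiffAt ℝ 1 r x) (hfix : ∀ x ∈ frontier U, r x = x) :
    ¬ MapsTo r U (frontier U) := by
  intro hmaps
  borelize E
  let μ : Measure E := Measure.addHaar
  have hzero : ∫ x in U, (fderiv ℝ r x).det ∂μ = 0 := by
    refine setIntegral_eq_zero_of_forall_eq_zero fun x hx => ?_
    refine det_fderiv_eq_zero_of_mapsTo (hU.mem_nhds hx) (hr x (subset_closure hx)) hmaps ?_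
    rw [← frontier_compl, interior_frontier hU.isClosed_compl]
  have hvol : μ.real U = 0 := by
    rw [← hzero, setIntegral_det_fderiv_of_eq_self_on_frontier μ hU hconv hbdd hr
      (hmaps.mono_right frontier_subset_closure) hfix]
  exact (ENNReal.toReal_pos (hU.measure_pos μ hne).ne' hbdd.measure_lt_top.ne).ne' hvol

end NormedSpace

end AnalyticBrouwer

section InnerProductSpace

open Metric Set Function
open scoped RealInnerProductSpace

variable {E : Type*} [NormedAddCommGroup E] [InnerProductSpace ℝ E] {R : ℝ} {x y u : E}

theorem real_inner_self_sub_pos (hyx : ‖y‖ ≤ ‖x‖) (hne : x ≠ y) : 0 < ⟪x, x - y⟫ := by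
  have hsub : 0 < ‖x - y‖ ^ 2 := pow_pos (norm_sub_pos_iff.2 hne) 2
  have hsq : ‖y‖ ^ 2 ≤ ‖x‖ ^ 2 := pow_le_pow_left₀ (norm_nonneg y) hyx 2
  rw [norm_sub_sq_real] at hsub
  rw [inner_sub_right, real_inner_self_eq_norm_sq]
  linarith

/-- The discriminant (divided by `4`) of the quadratic equation `‖x + t • u‖ ^ 2 = R ^ 2` in `t`. -/
def exitDiscrim (R : ℝ) (x u : E) : ℝ :=
  ⟪x, u⟫ ^ 2 + ‖u‖ ^ 2 * (R ^ 2 - ‖x‖ ^ 2)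

/-- The larger root `t` of `‖x + t • u‖ = R`: the time at which the ray from a point `x` of the
ball of radius `R` in the direction `u ≠ 0` leaves that ball. -/
def exitTime (R : ℝ) (x u : E) : ℝ :=
  (√(exitDiscrim R x u) - ⟪x, u⟫) / ‖u‖ ^ 2

theorem exitDiscrim_nonneg (hx : ‖x‖ ≤ R) : 0 ≤ exitDiscrim R x u := by
  have hsq : ‖x‖ ^ 2 ≤ R ^ 2 := pow_le_pow_left₀ (norm_nonneg x) hx 2
  have := mul_nonneg (sq_nonneg ‖u‖) (sub_nonneg.2 hsq)
  exact add_nonneg (sq_nonneg _) this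

theorem exitDiscrim_pos (hx : ‖x‖ ≤ R) (hu : u ≠ 0) (hxu : ‖x‖ = R → ⟪x, u⟫ ≠ 0) :
    0 < exitDiscrim R x u := by
  obtain hlt | heq := hx.lt_or_eq
  · have hsq : ‖x‖ ^ 2 < R ^ 2 := pow_lt_pow_left₀ hlt (norm_nonneg x) two_ne_zero
    have := mul_pos (pow_pos (norm_pos_iff.2 hu) 2) (sub_pos.2 hsq)
    exact add_pos_of_nonneg_of_pos (sq_nonneg _) this
  · simpa [exitDiscrim, heq] using sq_pos_of_ne_zero (hxu heq)

theorem norm_add_exitTime_smul (hx : ‖x‖ ≤ R) (hu : u ≠ 0) : ‖x + exitTime R x u • u‖ = R := by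
  have hroot : exitTime R x u * ‖u‖ ^ 2 + ⟪x, u⟫ = √(exitDiscrim R x u) := by
    rw [exitTime, div_mul_cancel₀ _ (pow_ne_zero 2 (norm_ne_zero_iff.2 hu)), sub_add_cancel]
  have hsq : (exitTime R x u * ‖u‖ ^ 2 + ⟪x, u⟫) ^ 2 =
      ⟪x, u⟫ ^ 2 + ‖u‖ ^ 2 * (R ^ 2 - ‖x‖ ^ 2) := by
    rw [hroot, Real.sq_sqrt (exitDiscrim_nonneg hx), exitDiscrim]
  refine (pow_left_inj₀ (norm_nonneg _) ((norm_nonneg x).trans hx) two_ne_zero).1 ?_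
  rw [norm_add_sq_real, norm_smul, mul_pow, real_inner_smul_right, Real.norm_eq_abs, sq_abs]
  refine mul_left_cancel₀ (pow_ne_zero 2 (norm_ne_zero_iff.2 hu)) ?_
  linear_combination hsq

theorem exitTime_norm_eq_zero (hxu : 0 ≤ ⟪x, u⟫) : exitTime ‖x‖ x u = 0 := by
  simp [exitTime, exitDiscrim, Real.sqrt_sq hxu]

theorem contDiffAt_exitTime {F : Type*} [NormedAddCommGroup F] [NormedSpace ℝ F] {n : WithTop ℕ∞}
    {f g : F → E} {a : F} (hf : ContDiffAt ℝ n f a) (hg : ContDiffAt ℝ n g a) (hga : g a ≠ 0)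
    (hdiscrim : exitDiscrim R (f a) (g a) ≠ 0) :
    ContDiffAt ℝ n (fun b => exitTime R (f b) (g b)) a := by
  have hinner := hf.inner ℝ hg
  have hD : ContDiffAt ℝ n (fun b => exitDiscrim R (f b) (g b)) a :=
    (hinner.pow 2).add ((hg.norm_sq ℝ).mul (contDiffAt_const.sub (hf.norm_sq ℝ)))
  exact ((hD.sqrt hdiscrim).sub hinner).div (hg.norm_sq ℝ)
    (pow_ne_zero 2 (norm_ne_zero_iff.2 hga))

theorem exists_isFixedPt_of_contDiffAt_closedBall [FiniteDimensional ℝ E] (hR : 0 < R) {f : E → E}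
    (hf : ∀ x ∈ closedBall 0 R, ContDiffAt ℝ 1 f x)
    (hmaps : MapsTo f (closedBall 0 R) (closedBall 0 R)) :
    ∃ x ∈ closedBall 0 R, IsFixedPt f x := by
  by_contra! hfix
  have hne (x : E) (hx : ‖x‖ ≤ R) : x - f x ≠ 0 :=
    sub_ne_zero.2 fun h => hfix x (mem_closedBall_zero_iff.2 hx) h.symm
  have hinner (x : E) (hx : ‖x‖ = R) : 0 < ⟪x, x - f x⟫ :=
    real_inner_self_sub_pos (hx ▸ mem_closedBall_zero_iff.1
      (hmaps (mem_closedBall_zero_iff.2 hx.le))) (sub_ne_zero.1 (hne x hx.le))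
  -- Following the ray from `f x` through `x` to the sphere retracts the ball onto its boundary.
  let r : E → E := fun x => x + exitTime R x (x - f x) • (x - f x)
  refine not_mapsTo_frontier_of_eq_self_on_frontier (r := r) isOpen_ball
    (convex_ball (0 : E) R) isBounded_ball (nonempty_ball.2 hR) ?_ ?_ ?_
  · rw [closure_ball _ hR.ne']
    intro x hx
    have hxR : ‖x‖ ≤ R := mem_closedBall_zero_iff.1 hx
    have hu : ContDiffAt ℝ 1 (fun x => x - f x) x := contDiffAt_id.sub (hf x hx)
    refine contDiffAt_id.add <|
      (contDiffAt_exitTime contDiffAt_id hu (hne x hxR) ?_).smul hu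
    exact (exitDiscrim_pos hxR (hne x hxR) fun h => (hinner x h).ne').ne'
  · rw [frontier_ball _ hR.ne']
    rintro x hx
    obtain rfl : ‖x‖ = R := mem_sphere_zero_iff_norm.1 hx
    simp [r, exitTime_norm_eq_zero (hinner x rfl).le]
  · rw [frontier_ball _ hR.ne']
    intro x hx
    have hxR : ‖x‖ ≤ R := (mem_ball_zero_iff.1 hx).le
    exact mem_sphere_zero_iff_norm.2 (norm_add_exitTime_smul hxR (hne x hxR))

theorem exists_isFixedPt_of_isBounded_range [FiniteDimensional ℝ E] {f : E → E}
    (hf : Continuous f) (hbdd : Bornology.IsBounded (range f)) : ∃ x, IsFixedPt f x := by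
  by_contra! hfix
  obtain ⟨R, hR, hfR⟩ := hbdd.exists_pos_norm_le
  obtain ⟨x₀, -, hx₀⟩ := (isCompact_closedBall (0 : E) (R + 1)).exists_isMinOn
    (nonempty_closedBall.2 (by positivity)) (f := fun x => dist x (f x))
    (continuous_id.dist hf).continuousOn
  obtain ⟨g, hg, hgf, -⟩ := hf.exists_contDiff_approx 1 (ε := fun _ => min 1 (dist x₀ (f x₀)))
    continuous_const fun _ => lt_min one_pos (dist_pos.2 (Ne.symm (hfix x₀)))
  have hgmaps : MapsTo g (closedBall 0 (R + 1)) (closedBall 0 (R + 1)) := by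
    intro x _
    rw [mem_closedBall, add_comm]
    exact (dist_triangle _ (f x) _).trans (add_le_add ((hgf x).le.trans (min_le_left _ _))
      (dist_zero_right (f x) ▸ hfR _ (mem_range_self x)))
  obtain ⟨x, hx, hgx⟩ :=
    exists_isFixedPt_of_contDiffAt_closedBall (by positivity) (fun x _ => hg.contDiffAt) hgmaps
  refine (isMinOn_iff.1 hx₀ x hx).not_gt ?_
  calc dist x (f x) = dist (g x) (f x) := by rw [hgx]
    _ < dist x₀ (f x₀) := (hgf x).trans_le (min_le_right _ _)

theorem exists_lipschitzWith_retraction {K : Set E} (hne : K.Nonempty) (hcomplete : IsComplete K)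
    (hconv : Convex ℝ K) :
    ∃ P : E → E, LipschitzWith 1 P ∧ (∀ x, P x ∈ K) ∧ ∀ x ∈ K, P x = x := by
  choose P hPK hP using exists_norm_eq_iInf_of_complete_convex hne hcomplete hconv
  have hobtuse (x w : E) (hw : w ∈ K) : ⟪x - P x, w - P x⟫ ≤ 0 :=
    (norm_eq_iInf_iff_real_inner_le_zero hconv (hPK x)).1 (hP x) w hw
  refine ⟨P, LipschitzWith.of_dist_le_mul fun x y => ?_, hPK, fun x hx => ?_⟩
  · have hsq : ‖P x - P y‖ * ‖P x - P y‖ ≤ ‖x - y‖ * ‖P x - P y‖ := calc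
      ‖P x - P y‖ * ‖P x - P y‖ = ⟪P x - P y, P x - P y⟫ :=
        (real_inner_self_eq_norm_mul_norm _).symm
      _ ≤ ⟪x - y, P x - P y⟫ := by
        have hx := hobtuse x (P y) (hPK y)
        have hy := hobtuse y (P x) (hPK x)
        simp only [inner_sub_left, inner_sub_right] at hx hy ⊢
        linarith
      _ ≤ ‖x - y‖ * ‖P x - P y‖ := real_inner_le_norm _ _
    rw [NNReal.coe_one, one_mul, dist_eq_norm, dist_eq_norm]
    obtain h0 | hpos := (norm_nonneg (P x - P y)).eq_or_lt
    · exact h0 ▸ norm_nonneg _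
    · exact le_of_mul_le_mul_right hsq hpos
  · exact (sub_eq_zero.1 (real_inner_self_nonpos.1 (hobtuse x x hx))).symm

end InnerProductSpace

section FixedPoint

open Set Function Filter Topology

theorem exists_isFixedPt_of_isCompact_convex_of_innerProductSpace {E : Type*}
    [NormedAddCommGroup E] [InnerProductSpace ℝ E] [FiniteDimensional ℝ E] {K : Set E}
    (hK : IsCompact K) (hconv : Convex ℝ K) (hne : K.Nonempty) {f : K → K} (hf : Continuous f) :
    ∃ x, IsFixedPt f x := by
  obtain ⟨P, hP, hPK, hPfix⟩ := exists_lipschitzWith_retraction hne hK.isComplete hconv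
  obtain ⟨x, hx⟩ := exists_isFixedPt_of_isBounded_range (f := fun x => (f ⟨P x, hPK x⟩ : E))
    (continuous_subtype_val.comp (hf.comp (hP.continuous.subtype_mk hPK)))
    (hK.isBounded.subset (range_subset_iff.2 fun x => (f _).2))
  have hxK : x ∈ K := hx ▸ (f _).2
  refine ⟨⟨x, hxK⟩, Subtype.ext ?_⟩
  have hx' : (f ⟨P x, hPK x⟩ : E) = x := hx
  simpa only [hPfix x hxK] using hx'

variable {E : Type*} [AddCommGroup E] [Module ℝ E] [FiniteDimensional ℝ E] [TopologicalSpace E]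
  [IsTopologicalAddGroup E] [ContinuousSMul ℝ E] [T2Space E]

theorem exists_isFixedPt_of_isCompact_convex {K : Set E} (hK : IsCompact K) (hconv : Convex ℝ K)
    (hne : K.Nonempty) {f : K → K} (hf : Continuous f) : ∃ x, IsFixedPt f x := by
  let e := (toEuclidean : E ≃L[ℝ] _)
  let h : K ≃ₜ e '' K := e.toHomeomorph.image K
  obtain ⟨y, hy⟩ := exists_isFixedPt_of_isCompact_convex_of_innerProductSpace
    (hK.image e.continuous) (hconv.linear_image e.toLinearMap) (hne.image e)
    (h.continuous.comp (hf.comp h.symm.continuous))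
  exact ⟨h.symm y, by simpa [IsFixedPt] using congrArg h.symm hy⟩

theorem exists_forall_nonpos_of_quasiconcaveOn {K : Set E} (hK : IsCompact K)
    (hconv : Convex ℝ K) (hne : K.Nonempty) {φ : E → E → ℝ}
    (hlsc : ∀ y ∈ K, LowerSemicontinuousOn (fun x => φ x y) K)
    (hquasi : ∀ x ∈ K, QuasiconcaveOn ℝ K (φ x)) (hdiag : ∀ x ∈ K, φ x x ≤ 0) :
    ∃ x ∈ K, ∀ y ∈ K, φ x y ≤ 0 := by
  by_contra! hcontra
  have := isCompact_iff_compactSpace.1 hK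
  obtain ⟨g, hg⟩ := exists_continuous_forall_mem_convex_of_local_const
    (t := fun x : K => {y ∈ K | 0 < φ x y}) (fun x => (hquasi x x.2).convex_gt 0) fun x => by
      obtain ⟨y, hy, hpos⟩ := hcontra x x.2
      refine ⟨y, ((eventually_nhds_subtype_iff K x (0 < φ · y)).2 ?_).mono fun _ h => ⟨hy, h⟩⟩
      exact hlsc y hy x x.2 0 hpos
  obtain ⟨x, hx⟩ := exists_isFixedPt_of_isCompact_convex hK hconv hne
    (f := fun x => ⟨g x, (hg x).1⟩) (g.continuous.subtype_mk _)
  have hgx : g x = x := congrArg Subtype.val hx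
  have hpos : 0 < φ x (g x) := (hg x).2
  exact (hdiag x x.2).not_gt (by rwa [hgx] at hpos)

end FixedPoint

section ConcaveGame

open Set Function

variable {I : Type*} [DecidableEq I] {E : I → Type*} [∀ i, AddCommGroup (E i)]
  [∀ i, Module ℝ (E i)]

theorem concaveOn_sum_apply_update_sub [Fintype I] {K : ∀ i, Set (E i)}
    {u : I → (∀ i, E i) → ℝ} {x : ∀ i, E i} (hK : Convex ℝ (univ.pi K))
    (hu : ∀ i, ConcaveOn ℝ (K i) fun y => u i (update x i y)) :
    ConcaveOn ℝ (univ.pi K) fun y => ∑ i, (u i (update x i (y i)) - u i x) := by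
  rw [← Finset.sum_fn]
  refine Finset.sum_induction _ (ConcaveOn ℝ (univ.pi K)) (fun _ _ => ConcaveOn.add)
    (concaveOn_const 0 hK) fun i _ => ConcaveOn.add_const ?_ _
  exact ((hu i).comp_linearMap (LinearMap.proj i)).subset (fun y hy => hy i (mem_univ i)) hK

theorem exists_forall_apply_update_le_of_concaveOn [Finite I] [∀ i, FiniteDimensional ℝ (E i)]
    [∀ i, TopologicalSpace (E i)] [∀ i, IsTopologicalAddGroup (E i)]
    [∀ i, ContinuousSMul ℝ (E i)] [∀ i, T2Space (E i)] {K : ∀ i, Set (E i)}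
    (hK : ∀ i, IsCompact (K i)) (hconv : ∀ i, Convex ℝ (K i)) (hne : ∀ i, (K i).Nonempty)
    {u : I → (∀ i, E i) → ℝ} (hcont : ∀ i, ContinuousOn (u i) (univ.pi K))
    (hconc : ∀ i, ∀ x ∈ univ.pi K, ConcaveOn ℝ (K i) fun y => u i (update x i y)) :
    ∃ x ∈ univ.pi K, ∀ i, ∀ y ∈ K i, u i (update x i y) ≤ u i x := by
  cases nonempty_fintype I
  have hupdate {x : ∀ i, E i} (hx : x ∈ univ.pi K) (i : I) {y : E i} (hy : y ∈ K i) :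
      update x i y ∈ univ.pi K := (update_mem_pi_iff_of_mem hx).2 fun _ => hy
  have hpi : Convex ℝ (univ.pi K) := convex_pi fun i _ => hconv i
  obtain ⟨x, hx, hmax⟩ := exists_forall_nonpos_of_quasiconcaveOn (isCompact_univ_pi hK) hpi
    (univ_pi_nonempty_iff.2 hne) (φ := fun x y => ∑ i, (u i (update x i (y i)) - u i x))
    (fun y hy => ContinuousOn.lowerSemicontinuousOn <| continuousOn_finsetSum _ fun i _ =>
      ((hcont i).comp (continuous_id.update i continuous_const).continuousOn
        fun x hx => hupdate hx i (hy i (mem_univ i))).sub (hcont i))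
    (fun x hx => (concaveOn_sum_apply_update_sub hpi fun i => hconc i x hx).quasiconcaveOn)
    (fun x _ => by simp)
  refine ⟨x, hx, fun i y hy => ?_⟩
  have hle := hmax (update x i y) (hupdate hx i hy)
  rw [Finset.sum_eq_single i (fun j _ hj => by simp [hj]) (by simp)] at hle
  simpa using hle

end ConcaveGame

section Game

open Set Function Filter Topology

variable {U : ι → (∀ j, S j) → ℝ} {ε : ∀ i, S i → ℝ} {i : ι}

/-- The expected payoff `profPay U i` as a multilinear function of the players' mixed strategies,
here arbitrary weights on the pure strategies. -/
def profPayMultilinear (U : ι → (∀ j, S j) → ℝ) (i : ι) :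
    MultilinearMap ℝ (fun j => S j → ℝ) ℝ :=
  ∑ s : ∀ j, S j,
    U i s • (MultilinearMap.mkPiAlgebra ℝ ι ℝ).compLinearMap fun j => LinearMap.proj (s j)

theorem profPayMultilinear_apply (μ : ∀ j, S j → ℝ) :
    profPayMultilinear U i μ = profPay U i μ := by
  simp [profPayMultilinear, profPay, mul_comm]

theorem continuous_profPay : Continuous (profPay U i) := by
  unfold profPay
  fun_prop

theorem concaveOn_profPay_update (μ : ∀ j, S j → ℝ) {K : Set (S i → ℝ)} (hK : Convex ℝ K) :
    ConcaveOn ℝ K fun τ => profPay U i (update μ i τ) := by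
  simp only [← profPayMultilinear_apply]
  exact ((profPayMultilinear U i).toLinearMap μ i).concaveOn hK

theorem setOf_inTrembleSet {J : Type} {T : J → Type} [∀ j, Fintype (T j)] {δ : ∀ j, T j → ℝ}
    {j : J} (hδ : 0 ≤ δ j) :
    {μ | InTrembleSet δ j μ} = stdSimplex ℝ (T j) ∩ Ici (δ j) :=
  Set.ext fun _ => ⟨fun h => ⟨⟨fun s => (hδ s).trans (h.2 s), h.1⟩, h.2⟩, fun h => ⟨h.1.2, h.2⟩⟩

theorem exists_inTrembleSet {J : Type} {T : J → Type} [∀ j, Fintype (T j)] {δ : ∀ j, T j → ℝ}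
    {j : J} [Nonempty (T j)] (hsum : ∑ s, δ j s ≤ 1) : ∃ μ, InTrembleSet δ j μ := by
  obtain ⟨s₀⟩ := ‹Nonempty (T j)›
  refine ⟨δ j + Pi.single s₀ (1 - ∑ s, δ j s), ?_, ?_⟩
  · simp [Finset.sum_add_distrib]
  · have hmass : 0 ≤ (Pi.single s₀ (1 - ∑ s, δ j s) : T j → ℝ) :=
      Pi.single_nonneg.2 (sub_nonneg.2 hsum)
    exact fun s => le_add_of_nonneg_right (hmass s)

theorem exists_isEpsEquilibrium (U : ι → (∀ j, S j) → ℝ) (hε : ∀ i, 0 ≤ ε i)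
    (hne : ∀ i, ∃ μ, InTrembleSet ε i μ) : ∃ σ, IsEpsEquilibrium U ε σ := by
  have hconv (i : ι) : Convex ℝ {μ | InTrembleSet ε i μ} :=
    setOf_inTrembleSet (hε i) ▸ (convex_stdSimplex ℝ (S i)).inter (convex_Ici (ε i))
  have hcpt (i : ι) : IsCompact {μ | InTrembleSet ε i μ} :=
    setOf_inTrembleSet (hε i) ▸ (isCompact_stdSimplex ℝ (S i)).inter_right isClosed_Ici
  obtain ⟨σ, hσ, hmax⟩ := exists_forall_apply_update_le_of_concaveOn hcpt hconv hne
    (fun _ => continuous_profPay.continuousOn)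
    (fun i μ _ => concaveOn_profPay_update (U := U) μ (hconv i))
  exact ⟨σ, fun i => hσ i (mem_univ i), hmax⟩

theorem exists_isPCE_of_tendsto [∀ i, Nonempty (S i)] {ε : ℕ → ∀ i, S i → ℝ}
    (hε : ∀ t, PlayerCompatibleTremble U (ε t))
    (hlim : ∀ i si, Tendsto (fun t => ε t i si) atTop (𝓝 0)) : ∃ σstar, IsPCE U σstar := by
  have hpos (t : ℕ) (i : ι) : 0 ≤ ε t i := fun si => ((hε t).1 i si).le
  have hsum : ∀ᶠ t in atTop, ∀ i, ∑ si, ε t i si ≤ 1 := by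
    refine eventually_all.2 fun i => Tendsto.eventually_le_const zero_lt_one ?_
    simpa using tendsto_finsetSum Finset.univ fun si _ => hlim i si
  obtain ⟨N, hN⟩ := eventually_atTop.1 hsum
  choose σ hσ using fun t => exists_isEpsEquilibrium U (hpos (t + N)) fun i =>
    exists_inTrembleSet (hN (t + N) (Nat.le_add_left N t) i)
  have hσmem (t : ℕ) : σ t ∈ univ.pi fun i => stdSimplex ℝ (S i) := fun i _ =>
    ((setOf_inTrembleSet (hpos (t + N) i)).subset ((hσ t).1 i)).1
  obtain ⟨σstar, -, φ, hφ, hσlim⟩ :=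
    (isCompact_univ_pi fun i => isCompact_stdSimplex ℝ (S i)).tendsto_subseq hσmem
  exact ⟨σstar, fun t => ε (φ t + N), σ ∘ φ, fun t => hε _,
    fun i si => (hlim i si).comp ((tendsto_add_atTop_nat N).comp hφ.tendsto_atTop),
    fun t => hσ _, fun i si => (hσlim.apply_nhds i).apply_nhds si⟩

theorem playerCompatibleTremble_const {e : ℝ} (he : 0 < e) :
    PlayerCompatibleTremble U fun _ _ => e :=
  ⟨fun _ _ => he, fun _ _ _ _ _ _ => le_rfl⟩

theorem pce_exists_general (U : ι → (∀ j, S j) → ℝ) [∀ i, Nonempty (S i)] :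
    ∃ σstar : ∀ i, S i → ℝ, IsPCE U σstar :=
  exists_isPCE_of_tendsto (ε := fun t _ _ => 1 / ((t : ℝ) + 1))
    (fun t => playerCompatibleTremble_const (Nat.one_div_pos_of_nat (n := t)))
    fun _ _ => tendsto_one_div_add_atTop_nhds_zero_nat

end Game

/-- PCE exists in every finite strategic-form game (with no strictly dominated strategies). -/
theorem pce_exists
    (U : ι → (∀ j, S j) → ℝ)
    (hcard : ∀ i, 2 ≤ Fintype.card (S i))
    (hnodom : ∀ (i : ι) (si : S i), ¬ StrictlyDominated U i si) :
    ∃ σstar : ∀ i, S i → ℝ, IsPCE U σstar := by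
  have (i : ι) : Nonempty (S i) := Fintype.card_pos_iff.1 (zero_lt_two.trans_le (hcard i))
  exact pce_exists_general U

end
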